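/- arXiv:1510.02150 — 3 statements merged into one kernel-verified Lean document; each statement's English description precedes it below -/
import Mathlib

section
/- Let (x*,λ*) ∈ ℝⁿ × ℝ≥0^m be a saddle point of the Lagrangian L over ℝⁿ × ℝ≥0^m. Then for every (x,λ) ∈ ℝⁿ × ℝ≥0^m, ⟨x − x*, ∇f(x) − Σᵢ λᵢ ∇gᵢ(x)⟩ + ⟨λ − λ*, [g(x)]_λ^+⟩ ≤ 0 (i.e., the Lie derivative of V(x,λ) = ½‖x − x*‖² + ½‖λ − λ*‖² along the primal-dual dynamics is nonpositive everywhere on ℝⁿ × ℝ≥0^m). -/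
open scoped RealInnerProductSpace

/-!
Concavity of `L(·, λ)` bounds the primal term by `L(x, λ) - L(x*, λ)`. Replacing `[g(x)]_λ^+` by
`g(x)` only increases the dual term, and `L(x, ·)` is affine with slope `-g(x)`, so the dual term
is at most `L(x, λ*) - L(x, λ)`. The sum is at most `L(x, λ*) - L(x*, λ)`, which is nonpositive
because both values are compared with `L(x*, λ*)` at the saddle point.
-/

section FirstOrderCondition

theorem sub_le_fderiv_apply_sub_of_convexOn {E : Type*} [NormedAddCommGroup E] [NormedSpace ℝ E]
    {s : Set E} {f : E → ℝ} {f' : E →L[ℝ] ℝ} {x y : E} (hf : ConvexOn ℝ s f)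
    (hf' : HasFDerivWithinAt f f' s x) (hx : x ∈ s) (hy : y ∈ s) :
    f x - f y ≤ f' (x - y) := by
  let γ : ℝ →ᵃ[ℝ] E := AffineMap.lineMap x y
  have hγ : ConvexOn ℝ (γ ⁻¹' s) (f ∘ γ) := hf.comp_affineMap γ
  have hγ' : HasDerivWithinAt (f ∘ γ) (f' (y - x)) (γ ⁻¹' s) 0 :=
    hf'.comp_hasDerivWithinAt_of_eq 0 AffineMap.hasDerivWithinAt_lineMap
      (Set.mapsTo_preimage γ s) (AffineMap.lineMap_apply_zero x y).symm
  have slope_bound : f' (y - x) ≤ slope (f ∘ γ) 0 1 :=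
    hγ.le_slope_of_hasDerivWithinAt (by simpa [γ] using hx) (by simpa [γ] using hy) one_pos hγ'
  have slope_eq : slope (f ∘ γ) 0 1 = f y - f x := by simp [slope, γ]
  rw [← neg_sub y x, map_neg]
  linarith

variable {E : Type*} [NormedAddCommGroup E] [InnerProductSpace ℝ E] [CompleteSpace E]
  {s : Set E} {f : E → ℝ} {f' x y : E}

theorem sub_le_inner_sub_gradient_of_convexOn (hf : ConvexOn ℝ s f)
    (hf' : HasGradientWithinAt f f' s x) (hx : x ∈ s) (hy : y ∈ s) :
    f x - f y ≤ ⟪x - y, f'⟫ := by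
  simpa [real_inner_comm] using
    sub_le_fderiv_apply_sub_of_convexOn hf hf'.hasFDerivWithinAt hx hy

theorem inner_sub_gradient_le_sub_of_concaveOn (hf : ConcaveOn ℝ s f)
    (hf' : HasGradientWithinAt f f' s x) (hx : x ∈ s) (hy : y ∈ s) :
    ⟪x - y, f'⟫ ≤ f x - f y := by
  have h := sub_le_fderiv_apply_sub_of_convexOn hf.neg hf'.hasFDerivWithinAt.neg hx hy
  simp only [Pi.neg_apply, neg_apply, InnerProductSpace.toDual_apply_apply] at h
  rw [real_inner_comm]
  linarith

end FirstOrderCondition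

/-- The projection `[a]_b^+` of a velocity `a` at a point `b ≥ 0`, which keeps the dual variables
of the primal-dual dynamics in `[0, ∞)`. A point `b < 0` is treated like `b = 0`. -/
noncomputable def nonnegProjection (a b : ℝ) : ℝ :=
  if 0 < b then a else max 0 a

theorem sub_mul_nonnegProjection_le {a b c : ℝ} (hc : 0 ≤ c) :
    (b - c) * nonnegProjection a b ≤ (b - c) * a := by
  unfold nonnegProjection
  split_ifs with hb
  · rfl
  · have hbc : b - c ≤ 0 := by linarith
    exact mul_le_mul_of_nonpos_left (le_max_right 0 a) hbc

/-- The Lagrangian `L(x, μ) = f(x) - μᵀ g(x)` of maximizing `f` subject to `g ≤ 0`. -/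
def lagrangian {E ι : Type*} [Fintype ι] (f : E → ℝ) (g : ι → E → ℝ) (x : E) (μ : ι → ℝ) : ℝ :=
  f x - ∑ i, μ i * g i x

section Lagrangian

variable {E ι : Type*} [Fintype ι] {f : E → ℝ} {g : ι → E → ℝ} {x xs : E} {lam ls : ι → ℝ}

theorem sum_sub_mul_nonnegProjection_le_lagrangian_sub (hls : 0 ≤ ls) :
    ∑ i, (lam i - ls i) * nonnegProjection (g i x) (lam i)
      ≤ lagrangian f g x ls - lagrangian f g x lam :=
  calc ∑ i, (lam i - ls i) * nonnegProjection (g i x) (lam i)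
      ≤ ∑ i, (lam i - ls i) * g i x :=
        Finset.sum_le_sum fun i _ => sub_mul_nonnegProjection_le (hls i)
    _ = lagrangian f g x ls - lagrangian f g x lam := by
        simp only [lagrangian, sub_mul, Finset.sum_sub_distrib]
        ring

variable [NormedAddCommGroup E] [InnerProductSpace ℝ E] [CompleteSpace E]
  {s : Set E} {f' : E} {g' : ι → E}

theorem inner_sub_gradient_le_lagrangian_sub (hf : ConcaveOn ℝ s f)
    (hg : ∀ i, ConvexOn ℝ s (g i)) (hf' : HasGradientWithinAt f f' s x)
    (hg' : ∀ i, HasGradientWithinAt (g i) (g' i) s x) (hlam : 0 ≤ lam)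
    (hx : x ∈ s) (hxs : xs ∈ s) :
    ⟪x - xs, f' - ∑ i, lam i • g' i⟫ ≤ lagrangian f g x lam - lagrangian f g xs lam :=
  calc ⟪x - xs, f' - ∑ i, lam i • g' i⟫
      = ⟪x - xs, f'⟫ - ∑ i, lam i * ⟪x - xs, g' i⟫ := by
        simp only [inner_sub_right, inner_sum, real_inner_smul_right]
    _ ≤ (f x - f xs) - ∑ i, lam i * (g i x - g i xs) := by
        gcongr with i
        · exact inner_sub_gradient_le_sub_of_concaveOn hf hf' hx hxs
        · exact hlam i
        · exact sub_le_inner_sub_gradient_of_convexOn (hg i) (hg' i) hx hxs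
    _ = lagrangian f g x lam - lagrangian f g xs lam := by
        simp only [lagrangian, mul_sub, Finset.sum_sub_distrib]
        ring

-- `IsSaddlePointOn` minimizes over its first variable, so the multipliers come first.
theorem lie_derivative_nonpos_general (hf : ConcaveOn ℝ s f) (hg : ∀ i, ConvexOn ℝ s (g i))
    (hf' : HasGradientWithinAt f f' s x) (hg' : ∀ i, HasGradientWithinAt (g i) (g' i) s x)
    (hxs : xs ∈ s) (hls : 0 ≤ ls)
    (hsaddle : IsSaddlePointOn (Set.Ici 0) s (fun μ y => lagrangian f g y μ) ls xs)
    (hx : x ∈ s) (hlam : 0 ≤ lam) :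
    ⟪x - xs, f' - ∑ i, lam i • g' i⟫
      + ∑ i, (lam i - ls i) * nonnegProjection (g i x) (lam i) ≤ 0 := by
  have primal : ⟪x - xs, f' - ∑ i, lam i • g' i⟫ ≤ lagrangian f g x lam - lagrangian f g xs lam :=
    inner_sub_gradient_le_lagrangian_sub hf hg hf' hg' hlam hx hxs
  have dual : ∑ i, (lam i - ls i) * nonnegProjection (g i x) (lam i)
      ≤ lagrangian f g x ls - lagrangian f g x lam :=
    sum_sub_mul_nonnegProjection_le_lagrangian_sub hls
  have saddle : lagrangian f g x ls ≤ lagrangian f g xs lam := hsaddle lam hlam x hx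
  linarith

end Lagrangian

/-- Monotonicity of the primal-dual dynamics with respect to primal-dual
optimizers: the Lie derivative of `V(x,λ) = ½‖x − x*‖² + ½‖λ − λ*‖²` along the primal-dual
dynamics is nonpositive on `ℝⁿ × ℝ≥0^m`. -/
theorem lie_derivative_nonpos (n m : ℕ)
    (f : EuclideanSpace ℝ (Fin n) → ℝ)
    (g : Fin m → EuclideanSpace ℝ (Fin n) → ℝ)
    (hf : ContDiff ℝ 1 f) (hfconc : StrictConcaveOn ℝ Set.univ f)
    (hfgrad : LocallyLipschitz (gradient f))
    (hg : ∀ i, ContDiff ℝ 1 (g i))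
    (hgconv : ∀ i, ConvexOn ℝ Set.univ (g i))
    (hggrad : ∀ i, LocallyLipschitz (gradient (g i)))
    (xs : EuclideanSpace ℝ (Fin n)) (ls : Fin m → ℝ) (hls : ∀ i, 0 ≤ ls i)
    (hsaddle1 : ∀ x, f x - ∑ i, ls i * g i x ≤ f xs - ∑ i, ls i * g i xs)
    (hsaddle2 : ∀ lam : Fin m → ℝ, (∀ i, 0 ≤ lam i) →
      f xs - ∑ i, ls i * g i xs ≤ f xs - ∑ i, lam i * g i xs)
    (x : EuclideanSpace ℝ (Fin n)) (lam : Fin m → ℝ) (hlam : ∀ i, 0 ≤ lam i) :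
    ⟪x - xs, gradient f x - ∑ i, lam i • gradient (g i) x⟫
      + ∑ i, (lam i - ls i) * (if 0 < lam i then g i x else max 0 (g i x)) ≤ 0 :=
  lie_derivative_nonpos_general hfconc.concaveOn hgconv
    (hasGradientWithinAt_univ.2 (hf.differentiable one_ne_zero x).hasGradientAt)
    (fun i => hasGradientWithinAt_univ.2 ((hg i).differentiable one_ne_zero x).hasGradientAt)
    (Set.mem_univ xs) hls (fun μ hμ y _ => (hsaddle1 y).trans (hsaddle2 μ hμ))
    (Set.mem_univ x) hlam
end

section
/- Let K = ℝⁿ × ℝ≥0^m, let (x,λ) ∈ K, and let v = (v_x, v_λ) ∈ ℝⁿ × ℝᵐ. Then the limit Π_K((x,λ),v) = lim_{δ→0⁺} (proj_K((x,λ) + δv) − (x,λ))/δ exists, its first block of components equals v_x, and for each i ∈ {1,…,m} its second-block i-th component equals 0 if λᵢ = 0 and (v_λ)ᵢ < 0, and equals (v_λ)ᵢ otherwise. -/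
open Filter

/-!
Moving from a point of `K` in a feasible direction stays in `K`, so the vector projection leaves
such a direction unchanged; a direction in the normal cone is projected back onto the base point,
so its vector projection is `0`. On a half-line every direction is of one of these two kinds.
For a product set, replacing a single coordinate of a nearest point shows that each coordinate is
itself a nearest point of its factor, so vector projections are computed factor by factor.
-/

open Set
open scoped ENNReal RealInnerProductSpace Topology

/-- `c` is a point of `s` closest to `y`, a value of the metric projection `proj_s(y)`.
Neither existence nor uniqueness of such a point is built in. -/
def IsNearestPoint {X : Type*} [PseudoMetricSpace X] (s : Set X) (y c : X) : Prop :=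
  c ∈ s ∧ ∀ q ∈ s, dist y c ≤ dist y q

namespace IsNearestPoint

theorem eq_of_mem {X : Type*} [MetricSpace X] {s : Set X} {y c : X}
    (h : IsNearestPoint s y c) (hy : y ∈ s) : c = y :=
  (dist_le_zero.mp ((h.2 y hy).trans_eq (dist_self y))).symm

theorem eq_of_forall_inner_nonpos {E : Type*} [NormedAddCommGroup E] [InnerProductSpace ℝ E]
    {s : Set E} {x y c : E} (h : IsNearestPoint s y c) (hx : x ∈ s)
    (hy : ∀ q ∈ s, ⟪y - x, q - x⟫ ≤ 0) : c = x := by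
  have hdist : ‖y - c‖ ^ 2 ≤ ‖y - x‖ ^ 2 := by
    simpa only [dist_eq_norm] using pow_le_pow_left₀ dist_nonneg (h.2 x hx) 2
  have hexpand : ‖y - c‖ ^ 2 = ‖y - x‖ ^ 2 - 2 * ⟪y - x, c - x⟫ + ‖c - x‖ ^ 2 := by
    rw [← norm_sub_sq_real, sub_sub_sub_cancel_right]
  have hzero : ‖c - x‖ ^ 2 = 0 := le_antisymm (by linarith [hy c h.1]) (sq_nonneg _)
  exact sub_eq_zero.mp (norm_eq_zero.mp (pow_eq_zero_iff two_ne_zero |>.mp hzero))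

theorem piLp_apply {ι : Type*} [Fintype ι] {X : ι → Type*} [∀ k, PseudoMetricSpace (X k)]
    {p : ℝ≥0∞} [Fact (1 ≤ p)] (hp : p ≠ ∞) {C : ∀ k, Set (X k)} {y c : PiLp p X}
    (h : IsNearestPoint {z : PiLp p X | ∀ k, z k ∈ C k} y c) (k : ι) :
    IsNearestPoint (C k) (y k) (c k) := by
  classical
  refine ⟨h.1 k, fun q hq => ?_⟩
  by_contra! hlt
  let c' : PiLp p X := WithLp.toLp p (Function.update c.ofLp k q)
  have hc'_self : c' k = q := Function.update_self k q c.ofLp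
  have hc'_ne : ∀ l ≠ k, c' l = c l := fun l hl => Function.update_of_ne hl q c.ofLp
  have hc'_mem : ∀ l, c' l ∈ C l := by
    intro l
    obtain rfl | hl := eq_or_ne l k
    · exact hc'_self ▸ hq
    · exact hc'_ne l hl ▸ h.1 l
  have hp_pos : 0 < p.toReal := ENNReal.toReal_pos (one_pos.trans_le Fact.out).ne' hp
  have hdist_k : dist (y k) (c' k) < dist (y k) (c k) := hc'_self ▸ hlt
  have hdist : dist y c' < dist y c := by
    rw [PiLp.dist_eq_sum hp_pos, PiLp.dist_eq_sum hp_pos]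
    refine Real.rpow_lt_rpow (by positivity) ?_ (by positivity)
    refine Finset.sum_lt_sum (fun l _ => ?_) ⟨k, Finset.mem_univ k, by gcongr⟩
    obtain rfl | hl := eq_or_ne l k
    · gcongr
    · rw [hc'_ne l hl]
  exact (h.2 c' hc'_mem).not_gt hdist

end IsNearestPoint

/-- `w` is the vector projection `Π_s(x, v)`. The limit is required along every choice of nearest
points to `x + δ • v`, so that `s` need not have a single-valued metric projection; if such points
fail to exist for arbitrarily small `δ > 0`, the condition is vacuous. -/
def HasVectorProjection {E : Type*} [NormedAddCommGroup E] [NormedSpace ℝ E]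
    (s : Set E) (x v w : E) : Prop :=
  ∀ c : ℝ → E, (∀ᶠ δ in 𝓝[>] 0, IsNearestPoint s (x + δ • v) (c δ)) →
    Tendsto (fun δ => δ⁻¹ • (c δ - x)) (𝓝[>] 0) (𝓝 w)

namespace HasVectorProjection

theorem of_eventually_mem {E : Type*} [NormedAddCommGroup E] [NormedSpace ℝ E]
    {s : Set E} {x v : E} (h : ∀ᶠ δ : ℝ in 𝓝[>] 0, x + δ • v ∈ s) :
    HasVectorProjection s x v v := by
  intro c hc
  refine tendsto_const_nhds.congr' ?_
  filter_upwards [h, hc, self_mem_nhdsWithin] with δ hmem hnear hδ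
  rw [hnear.eq_of_mem hmem, add_sub_cancel_left, inv_smul_smul₀ (ne_of_gt hδ)]

theorem of_forall_inner_nonpos {E : Type*} [NormedAddCommGroup E] [InnerProductSpace ℝ E]
    {s : Set E} {x v : E} (hx : x ∈ s) (hv : ∀ q ∈ s, ⟪v, q - x⟫ ≤ 0) :
    HasVectorProjection s x v 0 := by
  intro c hc
  refine tendsto_const_nhds.congr' ?_
  filter_upwards [hc, self_mem_nhdsWithin] with δ hnear hδ
  have hnormal : ∀ q ∈ s, ⟪x + δ • v - x, q - x⟫ ≤ 0 := by
    intro q hq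
    rw [add_sub_cancel_left, real_inner_smul_left]
    exact mul_nonpos_of_nonneg_of_nonpos (le_of_lt hδ) (hv q hq)
  rw [hnear.eq_of_forall_inner_nonpos hx hnormal, sub_self, smul_zero]

theorem piLp {ι : Type*} [Fintype ι] {E : ι → Type*} [∀ k, NormedAddCommGroup (E k)]
    [∀ k, NormedSpace ℝ (E k)] {p : ℝ≥0∞} [Fact (1 ≤ p)] (hp : p ≠ ∞) {C : ∀ k, Set (E k)}
    {x v w : PiLp p E} (h : ∀ k, HasVectorProjection (C k) (x k) (v k) (w k)) :
    HasVectorProjection {z : PiLp p E | ∀ k, z k ∈ C k} x v w := by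
  intro c hc
  have hcoord : Tendsto (fun δ => (δ⁻¹ • (c δ - x)).ofLp) (𝓝[>] 0) (𝓝 w.ofLp) :=
    tendsto_pi_nhds.mpr fun k => h k (fun δ => c δ k) (hc.mono fun _ hδ => hδ.piLp_apply hp k)
  exact ((PiLp.continuous_toLp p E).tendsto w.ofLp).comp hcoord

end HasVectorProjection

theorem hasVectorProjection_univ {E : Type*} [NormedAddCommGroup E] [NormedSpace ℝ E] (x v : E) :
    HasVectorProjection univ x v v :=
  .of_eventually_mem (.of_forall fun _ => mem_univ _)

theorem hasVectorProjection_Ici {a x : ℝ} (hx : a ≤ x) (v : ℝ) :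
    HasVectorProjection (Ici a) x v (if x = a ∧ v < 0 then 0 else v) := by
  split_ifs with hv
  · obtain ⟨rfl, hneg⟩ := hv
    exact .of_forall_inner_nonpos self_mem_Ici fun q hq =>
      mul_nonpos_of_nonneg_of_nonpos (sub_nonneg.mpr hq) hneg.le
  · apply HasVectorProjection.of_eventually_mem
    obtain rfl | hlt := hx.eq_or_lt
    · have hv_nonneg : 0 ≤ v := not_lt.mp fun hneg => hv ⟨rfl, hneg⟩
      filter_upwards [self_mem_nhdsWithin] with δ hδ
      exact le_add_of_nonneg_right (mul_nonneg (le_of_lt hδ) hv_nonneg)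
    · have hcont : ContinuousAt (fun δ : ℝ => x + δ • v) 0 := by fun_prop
      exact (hcont.eventually (Ici_mem_nhds (by simpa using hlt))).filter_mono nhdsWithin_le_nhds

theorem vector_projection_orthant_general {ι κ : Type*} [Fintype ι] [Fintype κ]
    {p : ℝ≥0∞} [Fact (1 ≤ p)] (hp : p ≠ ∞) {a : κ → ℝ} {z : PiLp p fun _ : ι ⊕ κ => ℝ}
    (hz : ∀ j, a j ≤ z (Sum.inr j)) (v : PiLp p fun _ : ι ⊕ κ => ℝ) :
    HasVectorProjection {y : PiLp p fun _ : ι ⊕ κ => ℝ | ∀ j, a j ≤ y (Sum.inr j)} z v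
      (WithLp.toLp p (Sum.elim (fun i => v (Sum.inl i)) fun j =>
        if z (Sum.inr j) = a j ∧ v (Sum.inr j) < 0 then 0 else v (Sum.inr j))) := by
  let C : ι ⊕ κ → Set ℝ := Sum.elim (fun _ => univ) fun j => Ici (a j)
  have hC : {y : PiLp p fun _ : ι ⊕ κ => ℝ | ∀ j, a j ≤ y (Sum.inr j)} =
      {y | ∀ k, y k ∈ C k} := by
    simp [C, Sum.forall]
  rw [hC]
  apply HasVectorProjection.piLp hp
  rintro (i | j)
  · exact hasVectorProjection_univ _ _
  · exact hasVectorProjection_Ici (hz j) _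

/-- For `K = ℝⁿ × ℝ≥0^m` (the nonnegative orthant in the `λ`-coordinates),
any point `(x,λ) ∈ K` and any vector `v`, the vector projection
`Π_K((x,λ),v) = lim_{δ→0⁺} (proj_K((x,λ)+δv) − (x,λ))/δ` exists; its first block equals the
first block of `v`, and its second-block `i`-th component is `0` when `λᵢ = 0` and `(v_λ)ᵢ < 0`,
and equals `(v_λ)ᵢ` otherwise. -/
theorem vector_projection_orthant (n m : ℕ)
    (K : Set (EuclideanSpace ℝ (Fin n ⊕ Fin m)))
    (hK : K = {z : EuclideanSpace ℝ (Fin n ⊕ Fin m) | ∀ j, 0 ≤ z (Sum.inr j)})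
    (proj : EuclideanSpace ℝ (Fin n ⊕ Fin m) → EuclideanSpace ℝ (Fin n ⊕ Fin m))
    (hproj : ∀ y, proj y ∈ K ∧ ∀ q ∈ K, dist y (proj y) ≤ dist y q)
    (z v : EuclideanSpace ℝ (Fin n ⊕ Fin m)) (hz : z ∈ K) :
    ∃ w : EuclideanSpace ℝ (Fin n ⊕ Fin m),
      Tendsto (fun δ : ℝ => δ⁻¹ • (proj (z + δ • v) - z))
        (nhdsWithin 0 (Set.Ioi 0)) (nhds w) ∧
      (∀ i, w (Sum.inl i) = v (Sum.inl i)) ∧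
      (∀ j, w (Sum.inr j) =
        if z (Sum.inr j) = 0 ∧ v (Sum.inr j) < 0 then 0 else v (Sum.inr j)) := by
  subst hK
  exact ⟨_, vector_projection_orthant_general (a := 0) ENNReal.ofNat_ne_top hz v _
    (.of_forall fun δ => hproj (z + δ • v)), fun _ => rfl, fun _ => rfl⟩
end

section
/- Let F : ℝᵈ → ℝᵈ be Lebesgue measurable and locally bounded, and let S ⊂ ℝᵈ be compact and invariant under the dynamics ẋ = F(x) (every Caratheodory solution starting in S remains in S). Assume that for each x₀ ∈ S there exists a unique Caratheodory solution on [0,∞) starting at x₀ and that its omega-limit set is invariant. Let V : ℝᵈ → ℝ be continuously differentiable with ⟨∇V(x), F(x)⟩ ≤ 0 for all x ∈ S, and let M be the union of all invariant sets contained in the closure of {x ∈ S : ⟨∇V(x), F(x)⟩ = 0}. Then every Caratheodory solution γ starting in S converges to M, i.e., dist(γ(t), M) → 0 as t → ∞. -/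
open Set Filter
open scoped RealInnerProductSpace

/-- A Caratheodory solution of `ẋ = F(x)` on `[0,∞)`: a continuous curve with
`γ(t) = γ(0) + ∫₀ᵗ F(γ(s)) ds` for all `t ≥ 0`. -/
noncomputable def IsCaraSol (d : ℕ)
    (F : EuclideanSpace ℝ (Fin d) → EuclideanSpace ℝ (Fin d))
    (γ : ℝ → EuclideanSpace ℝ (Fin d)) : Prop :=
  ContinuousOn γ (Ici 0) ∧ ∀ t ∈ Ici (0:ℝ), γ t = γ 0 + ∫ s in (0:ℝ)..t, F (γ s)

/-- A set `A` is invariant under `ẋ = F(x)` if every Caratheodory solution starting in `A`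
remains in `A`. -/
def IsInvariant' (d : ℕ)
    (F : EuclideanSpace ℝ (Fin d) → EuclideanSpace ℝ (Fin d))
    (A : Set (EuclideanSpace ℝ (Fin d))) : Prop :=
  ∀ γ : ℝ → EuclideanSpace ℝ (Fin d),
    IsCaraSol d F γ → γ 0 ∈ A → ∀ t ∈ Ici (0:ℝ), γ t ∈ A

/-!
Along a solution `γ` in the compact set `S`, the function `V` is nonincreasing and bounded below,
hence has a limit `c`, so `V = c` on the omega-limit set `Ω` of `γ`. As `Ω` is invariant, a solution
`σ` starting at `y ∈ Ω` satisfies `V ∘ σ = c` on `[0, ∞)`; differentiating, `dV (F (σ t)) = 0` for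
almost every `t > 0`, and letting `t → 0⁺` along such times puts `y` in the closure of
`{x ∈ S | dV (F x) = 0}`. Therefore `Ω ⊆ M`, and by compactness `γ` converges to `Ω`.
-/

open MeasureTheory Bornology
open scoped Topology

section OmegaLimit

variable {X : Type*} [TopologicalSpace X]

/-- The omega-limit set of a curve, as the set of its cluster points at `∞`. -/
def omegaLimitSet (γ : ℝ → X) : Set X := {y | MapClusterPt y atTop γ}

theorem omegaLimitSet_eq_setOf_exists_seq [FirstCountableTopology X] (γ : ℝ → X) :
    omegaLimitSet γ = {y | ∃ u : ℕ → ℝ, Tendsto u atTop atTop ∧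
      Tendsto (fun k => γ (u k)) atTop (𝓝 y)} := by
  ext y
  refine ⟨fun hy => ?_, fun ⟨u, hu, huy⟩ => .of_comp hu huy.mapClusterPt⟩
  obtain ⟨u, huy, hu⟩ := hy.exists_seq_tendsto
  exact ⟨u, hu, huy⟩

theorem omegaLimitSet_congr {γ₁ γ₂ : ℝ → X} (h : γ₁ =ᶠ[atTop] γ₂) :
    omegaLimitSet γ₁ = omegaLimitSet γ₂ :=
  Set.ext fun _ => h.mapClusterPt_iff

theorem omegaLimitSet_subset_of_isClosed {γ : ℝ → X} {S : Set X} (hS : IsClosed S)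
    (hγ : ∀ᶠ t in atTop, γ t ∈ S) : omegaLimitSet γ ⊆ S :=
  fun _ hy => hS.mem_of_mapClusterPt hy hγ

theorem eq_of_mem_omegaLimitSet_of_tendsto {Y : Type*} [TopologicalSpace Y] [T2Space Y]
    {γ : ℝ → X} {V : X → Y} {y : X} {c : Y} (hV : ContinuousAt V y) (hy : y ∈ omegaLimitSet γ)
    (hc : Tendsto (V ∘ γ) atTop (𝓝 c)) : V y = c :=
  haveI : (𝓝 (V y) ⊓ map (V ∘ γ) atTop).NeBot := hy.continuousAt_comp hV
  tendsto_nhds_unique (tendsto_id'.2 inf_le_left) (tendsto_id'.2 (inf_le_right.trans hc))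

theorem tendsto_infDist_of_omegaLimitSet_subset {Y : Type*} [PseudoMetricSpace Y] {γ : ℝ → Y}
    {S M : Set Y} (hS : IsCompact S) (hγ : ∀ᶠ t in atTop, γ t ∈ S) (hM : omegaLimitSet γ ⊆ M) :
    Tendsto (fun t => Metric.infDist (γ t) M) atTop (𝓝 0) := by
  refine tendsto_order.2 ⟨fun ε hε => .of_forall fun t => hε.trans_le Metric.infDist_nonneg,
    fun ε hε => ?_⟩
  have hopen : IsOpen {x | Metric.infDist x M < ε} :=
    isOpen_lt (Metric.continuous_infDist_pt M) continuous_const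
  refine hS.adherence_nhdset (f := map γ atTop) (le_principal_iff.2 hγ) hopen fun y _ hy => ?_
  rwa [mem_ofPred_eq, Metric.infDist_zero_of_mem (hM hy)]

end OmegaLimit

theorem isBounded_image_of_forall_ball_norm_le {X E : Type*} [PseudoMetricSpace X]
    [SeminormedAddCommGroup E] {S : Set X} {f : X → E} (hS : IsCompact S)
    (hf : ∀ x, ∃ M ε : ℝ, 0 < ε ∧ ∀ y ∈ Metric.ball x ε, ‖f y‖ ≤ M) : IsBounded (f '' S) := by
  refine isBounded_image_of_isLocallyBounded_of_isCompact hS fun x => ?_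
  obtain ⟨M, ε, hε, hM⟩ := hf x
  exact ⟨_, Metric.ball_mem_nhds x hε, isBounded_iff_forall_norm_le.2 ⟨M, forall_mem_image.2 hM⟩⟩

theorem exists_tendsto_atTop_of_antitoneOn_Ici {α β : Type*} [Preorder α] [IsDirectedOrder α]
    [ConditionallyCompleteLinearOrder β] [TopologicalSpace β] [OrderTopology β] {f : α → β} {a : α}
    (hf : AntitoneOn f (Ici a)) (hb : BddBelow (f '' Ici a)) :
    ∃ c, Tendsto f atTop (𝓝 c) := by
  rw [image_eq_range] at hb
  exact ⟨_, tendsto_comp_val_Ici_atTop.1 (tendsto_atTop_ciInf (antitoneOn_iff_antitone.1 hf) hb)⟩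

theorem antitoneOn_of_absolutelyContinuous_of_ae_deriv_nonpos {f : ℝ → ℝ} {D : Set ℝ}
    (hD : D.OrdConnected)
    (hf : ∀ a ∈ D, ∀ b ∈ D, AbsolutelyContinuousOnInterval f a b)
    (hf' : ∀ᵐ t, t ∈ interior D → deriv f t ≤ 0) : AntitoneOn f D := by
  intro a ha b hb hab
  have hIoo : Ioo a b ⊆ interior D :=
    interior_maximal (Ioo_subset_Icc_self.trans (hD.out ha hb)) isOpen_Ioo
  have hint : ∫ t in a..b, deriv f t ≤ 0 := by
    rw [intervalIntegral.integral_of_le hab, integral_Ioc_eq_integral_Ioo]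
    refine setIntegral_nonpos_of_ae_restrict ((ae_restrict_iff' measurableSet_Ioo).2 ?_)
    filter_upwards [hf'] with t ht htab using ht (hIoo htab)
  exact sub_nonpos.1 ((hf a ha b hb).integral_deriv_eq_sub ▸ hint)

section Caratheodory

variable {E : Type*} [NormedAddCommGroup E] [NormedSpace ℝ E]

/-- Caratheodory solutions on `[0, ∞)` of `ẋ = F x` in a normed space; `IsCaraSol d` is the case
`E = ℝᵈ`, by definitional unfolding. -/
def IsCaratheodorySolution (F : E → E) (γ : ℝ → E) : Prop :=
  ContinuousOn γ (Ici 0) ∧ ∀ t ∈ Ici (0 : ℝ), γ t = γ 0 + ∫ s in (0 : ℝ)..t, F (γ s)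

/-- Forward invariance of `A` under the Caratheodory solutions of `ẋ = F x` in a normed space;
`IsInvariant' d` is the case `E = ℝᵈ`, by definitional unfolding. -/
def IsCaratheodoryInvariant (F : E → E) (A : Set E) : Prop :=
  ∀ γ : ℝ → E, IsCaratheodorySolution F γ → γ 0 ∈ A → MapsTo γ (Ici 0) A

namespace IsCaratheodorySolution

variable [MeasurableSpace E] [BorelSpace E] {F : E → E} {γ : ℝ → E} {A : Set E}

theorem intervalIntegrable (hγ : IsCaratheodorySolution F γ) (hF : StronglyMeasurable F)
    (hFA : IsBounded (F '' A)) (hγA : MapsTo γ (Ici 0) A) {a b : ℝ} (ha : 0 ≤ a) (hb : 0 ≤ b) :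
    IntervalIntegrable (fun t => F (γ t)) volume a b := by
  obtain ⟨K, hK⟩ := hFA.exists_norm_le
  have hsub : uIoc a b ⊆ Ici 0 := fun t ht => (le_min ha hb).trans ht.1.le
  have hγm : AEMeasurable γ (volume.restrict (uIoc a b)) :=
    (hγ.1.mono hsub).aemeasurable measurableSet_uIoc
  refine intervalIntegrable_iff.2 (.of_bound measure_Ioc_lt_top
    (hF.aestronglyMeasurable.comp_aemeasurable hγm) K ?_)
  exact ae_restrict_of_forall_mem measurableSet_uIoc fun t ht =>
    hK _ (mem_image_of_mem F (hγA (hsub ht)))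

theorem exists_lipschitzOnWith (hγ : IsCaratheodorySolution F γ) (hF : StronglyMeasurable F)
    (hFA : IsBounded (F '' A)) (hγA : MapsTo γ (Ici 0) A) :
    ∃ K, LipschitzOnWith K γ (Ici 0) := by
  obtain ⟨K, hK⟩ := hFA.exists_norm_le
  refine ⟨K.toNNReal, .of_dist_le' fun a ha b hb => ?_⟩
  have hint {t : ℝ} (ht : 0 ≤ t) : IntervalIntegrable (fun s => F (γ s)) volume 0 t :=
    hγ.intervalIntegrable hF hFA hγA le_rfl ht
  rw [dist_eq_norm, hγ.2 a ha, hγ.2 b hb, add_sub_add_left_eq_sub,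
    intervalIntegral.integral_interval_sub_left (hint ha) (hint hb), Real.dist_eq]
  refine intervalIntegral.norm_integral_le_of_norm_le_const fun t ht => hK _ ?_
  exact mem_image_of_mem F (hγA ((le_min hb ha).trans ht.1.le))

variable [CompleteSpace E]

theorem ae_hasDerivAt (hγ : IsCaratheodorySolution F γ) (hF : StronglyMeasurable F)
    (hFA : IsBounded (F '' A)) (hγA : MapsTo γ (Ici 0) A) :
    ∀ᵐ t, 0 < t → HasDerivAt γ (F (γ t)) t := by
  have hderiv (n : ℕ) :=
    (hγ.intervalIntegrable hF hFA hγA le_rfl n.cast_nonneg).ae_hasDerivAt_integral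
  filter_upwards [ae_all_iff.2 hderiv] with t ht ht0
  obtain ⟨n, hn⟩ := exists_nat_ge t
  have htn : t ∈ uIcc (0 : ℝ) n := mem_uIcc_of_le ht0.le hn
  refine ((ht n htn 0 left_mem_uIcc).const_add (γ 0)).congr_of_eventuallyEq ?_
  filter_upwards [lt_mem_nhds ht0] with s hs using hγ.2 s hs.le

theorem ae_hasDerivAt_comp (hγ : IsCaratheodorySolution F γ) (hF : StronglyMeasurable F)
    (hFA : IsBounded (F '' A)) (hγA : MapsTo γ (Ici 0) A) {V : E → ℝ} (hV : Differentiable ℝ V) :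
    ∀ᵐ t, 0 < t → HasDerivAt (V ∘ γ) (fderiv ℝ V (γ t) (F (γ t))) t := by
  filter_upwards [hγ.ae_hasDerivAt hF hFA hγA] with t ht ht0
  exact (hV (γ t)).hasFDerivAt.comp_hasDerivAt t (ht ht0)

theorem antitoneOn_comp (hγ : IsCaratheodorySolution F γ) (hF : StronglyMeasurable F)
    (hFA : IsBounded (F '' A)) (hγA : MapsTo γ (Ici 0) A) {V : E → ℝ} (hV : Differentiable ℝ V)
    {L : NNReal} (hVL : LipschitzOnWith L V A) (hVF : ∀ x ∈ A, fderiv ℝ V x (F x) ≤ 0) :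
    AntitoneOn (V ∘ γ) (Ici 0) := by
  obtain ⟨K, hK⟩ := hγ.exists_lipschitzOnWith hF hFA hγA
  refine antitoneOn_of_absolutelyContinuous_of_ae_deriv_nonpos ordConnected_Ici (fun a ha b hb =>
    ((hVL.comp hK hγA).mono (ordConnected_Ici.uIcc_subset ha hb)).absolutelyContinuousOnInterval) ?_
  filter_upwards [hγ.ae_hasDerivAt_comp hF hFA hγA hV] with t ht ht0
  rw [interior_Ici, mem_Ioi] at ht0
  exact (ht ht0).deriv.trans_le (hVF _ (hγA ht0.le))

theorem exists_tendsto_comp (hγ : IsCaratheodorySolution F γ) (hF : StronglyMeasurable F)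
    (hFA : IsBounded (F '' A)) (hA : IsCompact A) (hγA : MapsTo γ (Ici 0) A) {V : E → ℝ}
    (hV : Differentiable ℝ V) (hVL : LocallyLipschitzOn A V)
    (hVF : ∀ x ∈ A, fderiv ℝ V x (F x) ≤ 0) :
    ∃ c, Tendsto (V ∘ γ) atTop (𝓝 c) := by
  obtain ⟨L, hL⟩ := hVL.exists_lipschitzOnWith_of_compact hA
  refine exists_tendsto_atTop_of_antitoneOn_Ici (hγ.antitoneOn_comp hF hFA hγA hV hL hVF)
    ((hA.image hV.continuous).bddBelow.mono ?_)
  rw [image_comp]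
  exact image_mono hγA.image_subset

end IsCaratheodorySolution

variable [CompleteSpace E] [MeasurableSpace E] [BorelSpace E] {F : E → E}

theorem IsCaratheodoryInvariant.subset_closure_fderiv_eq_zero {A : Set E}
    (hA : IsCaratheodoryInvariant F A) (hF : StronglyMeasurable F) (hFA : IsBounded (F '' A))
    (hexist : ∀ x ∈ A, ∃ σ, IsCaratheodorySolution F σ ∧ σ 0 = x)
    {V : E → ℝ} (hV : Differentiable ℝ V) {c : ℝ} (hVc : ∀ x ∈ A, V x = c) :
    A ⊆ closure {x ∈ A | fderiv ℝ V x (F x) = 0} := by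
  intro x hx
  obtain ⟨σ, hσ, rfl⟩ := hexist x hx
  have hσA : MapsTo σ (Ici 0) A := hA σ hσ hx
  have hzero : ∀ᵐ t, 0 < t → fderiv ℝ V (σ t) (F (σ t)) = 0 := by
    filter_upwards [hσ.ae_hasDerivAt_comp hF hFA hσA hV] with t ht ht0
    refine (ht ht0).unique ((hasDerivAt_const t c).congr_of_eventuallyEq ?_)
    filter_upwards [lt_mem_nhds ht0] with s hs using hVc _ (hσA hs.le)
  have hclosure : (0 : ℝ) ∈ closure (Ioi 0 ∩ {t | 0 < t → fderiv ℝ V (σ t) (F (σ t)) = 0}) :=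
    closure_minimal ((Measure.dense_of_ae hzero).open_subset_closure_inter isOpen_Ioi)
      isClosed_closure (by simp)
  have hcont : ContinuousWithinAt σ (Ioi 0 ∩ {t | 0 < t → fderiv ℝ V (σ t) (F (σ t)) = 0}) 0 :=
    (hσ.1 0 self_mem_Ici).mono (inter_subset_left.trans Ioi_subset_Ici_self)
  exact hcont.mem_closure hclosure fun t ht => ⟨hσA (Ioi_subset_Ici_self ht.1), ht.2 ht.1⟩

theorem invariance_principle_general (hF : StronglyMeasurable F) {S : Set E} (hS : IsCompact S)
    (hFS : IsBounded (F '' S)) (hexist : ∀ x ∈ S, ∃ σ, IsCaratheodorySolution F σ ∧ σ 0 = x)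
    {V : E → ℝ} (hV : Differentiable ℝ V) (hVL : LocallyLipschitzOn S V)
    (hVF : ∀ x ∈ S, fderiv ℝ V x (F x) ≤ 0) {γ : ℝ → E} (hγ : IsCaratheodorySolution F γ)
    (hγS : MapsTo γ (Ici 0) S) (hΩ : IsCaratheodoryInvariant F (omegaLimitSet γ)) :
    Tendsto (fun t => Metric.infDist (γ t) (⋃₀ {A | IsCaratheodoryInvariant F A ∧
      A ⊆ closure {x ∈ S | fderiv ℝ V x (F x) = 0}})) atTop (𝓝 0) := by
  have hγS' : ∀ᶠ t in atTop, γ t ∈ S := (eventually_ge_atTop 0).mono hγS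
  have hΩS : omegaLimitSet γ ⊆ S := omegaLimitSet_subset_of_isClosed hS.isClosed hγS'
  obtain ⟨c, hc⟩ := hγ.exists_tendsto_comp hF hFS hS hγS hV hVL hVF
  have hVΩ : ∀ y ∈ omegaLimitSet γ, V y = c := fun y hy =>
    eq_of_mem_omegaLimitSet_of_tendsto hV.continuous.continuousAt hy hc
  have hΩZ : omegaLimitSet γ ⊆ closure {x ∈ S | fderiv ℝ V x (F x) = 0} :=
    (hΩ.subset_closure_fderiv_eq_zero hF (hFS.subset (image_mono hΩS))
      (fun x hx => hexist x (hΩS hx)) hV hVΩ).trans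
        (closure_mono fun x hx => ⟨hΩS hx.1, hx.2⟩)
  exact tendsto_infDist_of_omegaLimitSet_subset hS hγS' (subset_sUnion_of_mem ⟨hΩ, hΩZ⟩)

end Caratheodory

/-- invariance principle for discontinuous Caratheodory systems. Let
`F : ℝᵈ → ℝᵈ` be measurable and locally bounded, `S` compact and invariant, assume unique
Caratheodory solutions on `[0,∞)` from each point of `S` whose omega-limit sets are
invariant, and let `V` be `C¹` with `⟨∇V(x), F(x)⟩ ≤ 0` on `S`. If `M` is the union of all
invariant sets contained in the closure of `{x ∈ S : ⟨∇V(x), F(x)⟩ = 0}`, then every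
Caratheodory solution starting in `S` converges to `M`: `dist(γ(t), M) → 0` as `t → ∞`. -/
theorem invariance_principle (d : ℕ)
    (F : EuclideanSpace ℝ (Fin d) → EuclideanSpace ℝ (Fin d))
    (hFmeas : Measurable F)
    (hFbdd : ∀ x : EuclideanSpace ℝ (Fin d), ∃ (M : ℝ) (ε : ℝ), 0 < ε ∧
      ∀ y ∈ Metric.ball x ε, ‖F y‖ ≤ M)
    (S : Set (EuclideanSpace ℝ (Fin d)))
    (hScomp : IsCompact S) (hSinv : IsInvariant' d F S)
    (hexist : ∀ x0 ∈ S, ∃ γ : ℝ → EuclideanSpace ℝ (Fin d),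
      IsCaraSol d F γ ∧ γ 0 = x0 ∧
      (∀ γ' : ℝ → EuclideanSpace ℝ (Fin d),
        IsCaraSol d F γ' → γ' 0 = x0 → ∀ t ∈ Ici (0:ℝ), γ' t = γ t) ∧
      IsInvariant' d F {y | ∃ u : ℕ → ℝ, Tendsto u atTop atTop ∧
        Tendsto (fun k => γ (u k)) atTop (nhds y)})
    (V : EuclideanSpace ℝ (Fin d) → ℝ) (hV : ContDiff ℝ 1 V)
    (hVdecr : ∀ x ∈ S, ⟪gradient V x, F x⟫ ≤ 0)
    (M : Set (EuclideanSpace ℝ (Fin d)))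
    (hM : M = ⋃₀ {A | IsInvariant' d F A ∧
      A ⊆ closure {x ∈ S | ⟪gradient V x, F x⟫ = 0}})
    (γ : ℝ → EuclideanSpace ℝ (Fin d))
    (hγ : IsCaraSol d F γ) (hγ0 : γ 0 ∈ S) :
    Tendsto (fun t => Metric.infDist (γ t) M) atTop (nhds 0) := by
  subst hM
  obtain ⟨γ₁, -, -, huniq, hΩ⟩ := hexist (γ 0) hγ0
  have hγγ₁ : γ =ᶠ[atTop] γ₁ := (eventually_ge_atTop 0).mono (huniq γ hγ rfl)
  rw [← omegaLimitSet_eq_setOf_exists_seq, ← omegaLimitSet_congr hγγ₁] at hΩ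
  simp only [inner_gradient_left] at hVdecr ⊢
  exact invariance_principle_general hFmeas.stronglyMeasurable hScomp
    (isBounded_image_of_forall_ball_norm_le hScomp hFbdd)
    (fun x hx => (hexist x hx).imp fun _ hσ => ⟨hσ.1, hσ.2.1⟩) (hV.differentiable one_ne_zero)
    hV.locallyLipschitz.locallyLipschitzOn hVdecr hγ (hSinv γ hγ hγ0) hΩ
end
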